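/- Let T and T* be finite trees, each with at least 3 vertices, let v be a vertex of T that is not a leaf, and let v* be a vertex of T* that is not a leaf. Then the set R = (L(T) × {v*}) ∪ ({v} × L(T*)) is a general position set of the Cartesian product T □ T*. -/

import Mathlib

open SimpleGraph

/-- A set `S` of vertices of `G` is a general position set if for every three
pairwise-distinct vertices `x, y, z ∈ S` one has `d(x,y) ≠ d(x,z) + d(z,y)`. -/
def IsGenPosSet {V : Type*} (G : SimpleGraph V) (S : Set V) : Prop :=
  ∀ x ∈ S, ∀ y ∈ S, ∀ z ∈ S, x ≠ y → x ≠ z → y ≠ z →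
    G.dist x y ≠ G.dist x z + G.dist z y

/-- The general position number of a graph on a finite vertex type: the
cardinality of a largest general position set. -/
noncomputable def genPosNum {V : Type*} [Fintype V] (G : SimpleGraph V) : ℕ :=
  sSup {n | ∃ S : Finset V, IsGenPosSet G ↑S ∧ S.card = n}

/-- A vertex is a leaf if it has exactly one neighbour (degree 1). -/
def IsLeaf {V : Type*} (G : SimpleGraph V) (v : V) : Prop :=
  ∃! w, G.Adj v w

/-!
Distances in a box product add coordinatewise, so a vertex of the product lies on no geodesic
between two others as soon as one of its coordinates lies on no geodesic between the corresponding
coordinates. A leaf, or more generally a simplicial vertex, of a connected graph is never interior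
to a geodesic: its two neighbours on the geodesic would be equal or adjacent, giving a shortcut.
Each vertex of `(A × {w}) ∪ ({v} × B)`, with `A`, `B` consisting of simplicial vertices, `v ∉ A`
and `w ∉ B`, has a simplicial coordinate that no other vertex of this set shares.
-/

/-- A vertex is simplicial if its neighbours are pairwise adjacent. This generalizes leaves and is
what keeps a vertex out of the interior of every geodesic. -/
def IsSimplicial {V : Type*} (G : SimpleGraph V) (v : V) : Prop :=
  G.IsClique (G.neighborSet v)

section Dist

variable {V : Type*} {G : SimpleGraph V}

lemma IsLeaf.isSimplicial {v : V} (hv : IsLeaf G v) : IsSimplicial G v :=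
  fun _ ha _ hb hab ↦ absurd (hv.unique ha hb) hab

lemma exists_adj_dist_add_one_eq {x y : V} (hr : G.Reachable x y) (hne : x ≠ y) :
    ∃ w, G.Adj x w ∧ G.dist w y + 1 = G.dist x y := by
  obtain ⟨p, hp⟩ := hr.exists_walk_length_eq_dist
  cases p with
  | nil => exact absurd rfl hne
  | @cons _ w _ hxw q =>
    refine ⟨w, hxw, le_antisymm ?_ ?_⟩
    · rw [← hp, Walk.length_cons]
      exact Nat.add_le_add_right (dist_le q) 1
    · calc G.dist x y ≤ G.dist x w + G.dist w y := hxw.reachable.dist_triangle_left y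
        _ = G.dist w y + 1 := by rw [dist_eq_one_iff_adj.mpr hxw, add_comm]

lemma IsSimplicial.dist_le_one {z a b : V} (hz : IsSimplicial G z) (ha : G.Adj z a)
    (hb : G.Adj z b) : G.dist a b ≤ 1 := by
  obtain rfl | hab := eq_or_ne a b
  · simp
  · exact (dist_eq_one_iff_adj.mpr (hz ha hb hab)).le

lemma IsSimplicial.dist_lt_add {x y z : V} (hz : IsSimplicial G z) (hzx : G.Reachable z x)
    (hzy : G.Reachable z y) (hx : x ≠ z) (hy : y ≠ z) :
    G.dist x y < G.dist x z + G.dist z y := by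
  obtain ⟨a, hza, ha⟩ := exists_adj_dist_add_one_eq hzx hx.symm
  obtain ⟨b, hzb, hb⟩ := exists_adj_dist_add_one_eq hzy hy.symm
  have hax : G.Reachable a x := hza.symm.reachable.trans hzx
  have hab : G.Reachable a b := hza.symm.reachable.trans hzb.reachable
  calc G.dist x y ≤ G.dist x a + G.dist a y := hax.symm.dist_triangle_left y
    _ ≤ G.dist x a + (G.dist a b + G.dist b y) := by
      gcongr
      exact hab.dist_triangle_left y
    _ ≤ G.dist x a + (1 + G.dist b y) := by
      gcongr
      exact hz.dist_le_one hza hzb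
    _ < G.dist x z + G.dist z y := by
      rw [dist_comm (u := x) (v := a), dist_comm (u := x) (v := z)]
      lia

end Dist

section BoxProd

variable {V W : Type*} {G : SimpleGraph V} {H : SimpleGraph W} {x y : V × W}

lemma dist_boxProd (h₁ : G.Reachable x.1 y.1) (h₂ : H.Reachable x.2 y.2) :
    (G □ H).dist x y = G.dist x.1 y.1 + H.dist x.2 y.2 := by
  have hxy : (G □ H).Reachable x y := reachable_boxProd.mpr ⟨h₁, h₂⟩
  have h := edist_boxProd (G := G) (H := H) x y
  rw [← hxy.coe_dist_eq_edist, ← h₁.coe_dist_eq_edist, ← h₂.coe_dist_eq_edist] at h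
  exact_mod_cast h

lemma dist_boxProd_lt_add {z : V × W} (hG : G.Connected) (hH : H.Connected)
    (h : G.dist x.1 y.1 < G.dist x.1 z.1 + G.dist z.1 y.1 ∨
      H.dist x.2 y.2 < H.dist x.2 z.2 + H.dist z.2 y.2) :
    (G □ H).dist x y < (G □ H).dist x z + (G □ H).dist z y := by
  have hdist (p q : V × W) : (G □ H).dist p q = G.dist p.1 q.1 + H.dist p.2 q.2 :=
    dist_boxProd (hG _ _) (hH _ _)
  rw [hdist, hdist, hdist, add_add_add_comm]
  obtain h | h := h
  · exact add_lt_add_of_lt_of_le h hH.dist_triangle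
  · exact add_lt_add_of_le_of_lt hG.dist_triangle h

end BoxProd

theorem genPos_leaves_cross_general {V W : Type*} {G : SimpleGraph V} {H : SimpleGraph W}
    (hG : G.Connected) (hH : H.Connected) {A : Set V} {B : Set W}
    (hA : ∀ a ∈ A, IsSimplicial G a) (hB : ∀ b ∈ B, IsSimplicial H b)
    {v : V} (hv : v ∉ A) {w : W} (hw : w ∉ B) :
    IsGenPosSet (G □ H) ((A ×ˢ {w}) ∪ ({v} ×ˢ B)) := by
  intro x hx y hy z hz _ hxz hyz
  refine (dist_boxProd_lt_add hG hH ?_).ne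
  obtain ⟨hzA, hzw⟩ | ⟨hzv, hzB⟩ := hz
  · have fst_ne {p : V × W} (hp : p ∈ A ×ˢ {w} ∪ {v} ×ˢ B) (hpz : p ≠ z) : p.1 ≠ z.1 := by
      intro h
      obtain ⟨-, hpw⟩ | ⟨hpv, -⟩ := hp
      · exact hpz (Prod.ext h (hpw.trans hzw.symm))
      · exact hv (hpv ▸ h ▸ hzA)
    exact .inl ((hA _ hzA).dist_lt_add (hG _ _) (hG _ _) (fst_ne hx hxz) (fst_ne hy hyz))
  · have snd_ne {p : V × W} (hp : p ∈ A ×ˢ {w} ∪ {v} ×ˢ B) (hpz : p ≠ z) : p.2 ≠ z.2 := by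
      intro h
      obtain ⟨-, hpw⟩ | ⟨hpv, -⟩ := hp
      · exact hw (hpw ▸ h ▸ hzB)
      · exact hpz (Prod.ext (hpv.trans hzv.symm) h)
    exact .inr ((hB _ hzB).dist_lt_add (hH _ _) (hH _ _) (snd_ne hx hxz) (snd_ne hy hyz))

/-- For trees `T, T*` on at least 3 vertices, a non-leaf `v` of `T` and a
non-leaf `v*` of `T*`, the set `(L(T) × {v*}) ∪ ({v} × L(T*))` is a general
position set of `T □ T*`. -/
theorem genPos_leaves_cross {V W : Type*} [Fintype V] [Fintype W]
    (T : SimpleGraph V) (T' : SimpleGraph W)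
    (hT : T.IsTree) (hT' : T'.IsTree)
    (hV : 3 ≤ Fintype.card V) (hW : 3 ≤ Fintype.card W)
    (v : V) (hv : ¬ IsLeaf T v) (v' : W) (hv' : ¬ IsLeaf T' v') :
    IsGenPosSet (T □ T')
      (({x : V | IsLeaf T x} ×ˢ {v'}) ∪ ({v} ×ˢ {y : W | IsLeaf T' y})) :=
  genPos_leaves_cross_general hT.connected hT'.connected (fun _ hx ↦ hx.isSimplicial)
    (fun _ hy ↦ hy.isSimplicial) hv hv'
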